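/- arXiv:1010.0479 — 7 statements merged into one kernel-verified Lean document; each statement's English description precedes it below -/
import Mathlib

section
/- Let m ≥ 3 be odd and let G be a nontrivial subgroup of DihedralGroup m × DihedralGroup m. Then at least one of the following holds: (1) G is isomorphic to the cyclic group of order 2; (2) there is an odd r ≥ 3 with G isomorphic to the cyclic group of order r; (3) there is an odd r ≥ 3 with G isomorphic to the cyclic group of order 2r; (4) G is isomorphic to the Klein four-group Z_2 × Z_2; (5) there is an odd r ≥ 3 with G isomorphic to DihedralGroup r; (6) there is an odd r ≥ 3 with G isomorphic to DihedralGroup (2r); (7) there are odd r, s ≥ 3 with G isomorphic to (cyclic of order r) × (cyclic of order s); (8) there are odd r, s ≥ 3 with G isomorphic to DihedralGroup r × (cyclic of order s); (9) there are odd r, s ≥ 3 with G isomorphic to DihedralGroup r × DihedralGroup s; (10) there are odd r, s ≥ 3, a subgroup N of G isomorphic to (cyclic of order r) × (cyclic of order s) with index 2 in G, and an element φ of G with φ ∉ N, φ^2 = 1, and φ g φ⁻¹ = g⁻¹ for every g ∈ N. -/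
/-!
Rotations form a cyclic subgroup, so those elements of `G ≤ D_m × D_n` with both coordinates
rotations form a subgroup `N` of a product of two cyclic groups, hence itself a product of two
cyclic groups. If no element of `G` mixes a rotation with a reflection, then either `G = N`, or any
pair of reflections in `G` exhibits it as generalized dihedral over `N`. If `(sr i, r j) ∈ G`, then,
`n` being odd, its `n`-th power is `(sr i, 1)`; as a subgroup of `D_m` containing a reflection is
self-normalizing for `m` odd, `(x, 1) ∈ G` for every `(x, y) ∈ G`, so `G` is the product of a
dihedral subgroup of `D_m` and a cyclic or dihedral subgroup of `D_n`. The shorter types in the list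
are the degenerate cases of these four, with `D_1 ≅ Z_2`, `Z_2 × Z_k ≅ Z_{2k}` and
`Z_2 × D_k ≅ D_{2k}` for `k` odd.
-/

open DihedralGroup Function

section CyclicProduct

theorem exists_addEquiv_pi_zmod {ι A : Type*} [Finite ι] [AddCommGroup A] [Finite A] {v : ι → A}
    (hv : Submodule.span ℤ (Set.range v) = ⊤) (N : AddSubgroup A) :
    ∃ c : ι → ℕ, Nonempty (N ≃+ ∀ i, ZMod (c i)) := by
  have := Fintype.ofFinite ι
  let π : (ι → ℤ) →ₗ[ℤ] A := Fintype.linearCombination ℤ v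
  have hπ : Surjective π := by
    rw [← LinearMap.range_eq_top, Fintype.range_linearCombination, hv]
  let N' : Submodule ℤ A := N.toIntSubmodule
  -- The preimage `L` of `N` is again free of full rank, hence isomorphic to `ℤ ^ ι`.
  let L : Submodule ℤ (ι → ℤ) := N'.comap π
  have hL : Module.finrank ℤ L = Fintype.card ι := by
    have : Finite ((ι → ℤ) ⧸ L) := by
      have : Finite (A ⧸ N') := Finite.of_surjective N'.mkQ N'.mkQ_surjective
      refine Finite.of_injective (L.mapQ N' π le_rfl) ?_
      rw [← LinearMap.ker_eq_bot, Submodule.ker_mapQ, ← LinearMap.le_ker_iff_map,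
        Submodule.ker_mkQ]
    rw [(Submodule.finiteQuotient_iff L).1 this, Module.finrank_fintype_fun_eq_card]
  let b : Module.Basis ι ℤ L :=
    (Module.finBasisOfFinrankEq ℤ L hL).reindex (Fintype.equivFin ι).symm
  let f : L →ₗ[ℤ] N' := π.submoduleComap N'
  have hf : Surjective f := π.submoduleComap_surjective_of_surjective N' hπ
  let e := f.quotKerEquivOfSurjective hf
  have : Finite (L ⧸ LinearMap.ker f) := Finite.of_equiv N' e.symm.toEquiv
  have hker := (Submodule.finiteQuotient_iff (LinearMap.ker f)).1 this
  exact ⟨_, ⟨e.symm.toAddEquiv.trans (Submodule.quotientEquivPiZMod _ b hker)⟩⟩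

variable {A B H : Type*} [Group H]

theorem subgroupComap_injective [Group A] {f : H →* A} (hf : Injective f) (N : Subgroup A) :
    Injective (f.subgroupComap N) := fun _ _ h ↦ Subtype.ext (hf (congrArg Subtype.val h))

theorem exists_mulEquiv_zmod_of_injective [Group A] [IsCyclic A] {f : H →* A}
    (hf : Injective f) :
    ∃ r : ℕ, r ∣ Nat.card A ∧ Nonempty (H ≃* Multiplicative (ZMod r)) := by
  have : IsCyclic H := isCyclic_of_injective f hf
  exact ⟨Nat.card H, Subgroup.card_dvd_of_injective f hf, ⟨(zmodCyclicMulEquiv ‹_›).symm⟩⟩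

theorem exists_span_pair_ofMul_eq_top (A B : Type*) [CommGroup A] [CommGroup B] [IsCyclic A]
    [IsCyclic B] : ∃ v : Fin 2 → Additive (A × B), Submodule.span ℤ (Set.range v) = ⊤ := by
  obtain ⟨a, ha⟩ := IsCyclic.exists_generator (α := A)
  obtain ⟨b, hb⟩ := IsCyclic.exists_generator (α := B)
  refine ⟨![.ofMul (a, 1), .ofMul (1, b)], eq_top_iff.2 ?_⟩
  intro z _
  obtain ⟨k, hk⟩ := ha z.toMul.1
  obtain ⟨l, hl⟩ := hb z.toMul.2
  rw [Matrix.range_cons_cons_empty, Submodule.mem_span_pair]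
  refine ⟨k, l, Additive.toMul.injective (Prod.ext ?_ ?_)⟩
  · simpa using hk
  · simpa using hl

theorem exists_mulEquiv_zmod_prod_zmod_of_injective [CommGroup A] [CommGroup B] [IsCyclic A]
    [IsCyclic B] [Finite A] [Finite B] {f : H →* A × B} (hf : Injective f) :
    ∃ r s : ℕ, r * s ∣ Nat.card A * Nat.card B ∧
      Nonempty (H ≃* Multiplicative (ZMod r) × Multiplicative (ZMod s)) := by
  obtain ⟨v, hv⟩ := exists_span_pair_ofMul_eq_top A B
  obtain ⟨c, ⟨e⟩⟩ := exists_addEquiv_pi_zmod hv f.range.toAddSubgroup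
  let e₂ : Additive f.range ≃+ ZMod (c 0) × ZMod (c 1) :=
    e.trans (RingEquiv.piFinTwo fun i ↦ ZMod (c i)).toAddEquiv
  let g : H ≃* Multiplicative (ZMod (c 0)) × Multiplicative (ZMod (c 1)) :=
    ((MonoidHom.ofInjective hf).trans e₂.toMultiplicativeRight).trans
      (MulEquiv.prodMultiplicative _ _)
  refine ⟨c 0, c 1, ?_, ⟨g⟩⟩
  have hcard : Nat.card H = c 0 * c 1 := by
    rw [Nat.card_congr g.toEquiv, Nat.card_prod]
    exact congrArg₂ _ (Nat.card_zmod _) (Nat.card_zmod _)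
  rw [← hcard, ← Nat.card_prod]
  exact Subgroup.card_dvd_of_injective f hf

theorem nonempty_zmod_prod_zmod_mulEquiv_of_coprime {m n : ℕ} (h : m.Coprime n) :
    Nonempty (Multiplicative (ZMod m) × Multiplicative (ZMod n) ≃* Multiplicative (ZMod (m * n))) :=
  ⟨(MulEquiv.prodMultiplicative _ _).symm.trans
    (ZMod.chineseRemainder h).symm.toAddEquiv.toMultiplicative⟩

end CyclicProduct

/-- `H` is the generalized dihedral group of its subgroup `N`, with `φ` acting on `N` by inversion.
That `N` has index two and does not contain `φ` is encoded in `mul_mem_iff`. -/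
structure IsGeneralizedDihedral {H : Type*} [Group H] (N : Subgroup H) (φ : H) : Prop where
  sq_eq_one : φ ^ 2 = 1
  conj_eq_inv : ∀ g ∈ N, φ * g * φ⁻¹ = g⁻¹
  mul_mem_iff : ∀ h, φ * h ∈ N ↔ h ∉ N

namespace IsGeneralizedDihedral

variable {H K : Type*} [Group H] [Group K] {N : Subgroup H} {φ : H} {M : Subgroup K} {χ : K}

theorem notMem (h : IsGeneralizedDihedral N φ) : φ ∉ N := by
  simpa [N.one_mem] using h.mul_mem_iff 1

theorem index_eq_two (h : IsGeneralizedDihedral N φ) : N.index = 2 :=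
  Subgroup.index_eq_two_iff'.2 ⟨φ, fun b ↦ (xor_iff_iff_not ..).2 (h.mul_mem_iff b)⟩

theorem inv_eq_self (h : IsGeneralizedDihedral N φ) : φ⁻¹ = φ :=
  inv_eq_of_mul_eq_one_left (by rw [← sq, h.sq_eq_one])

theorem mul_self_mul (h : IsGeneralizedDihedral N φ) (x : H) : φ * (φ * x) = x := by
  rw [← mul_assoc, ← sq, h.sq_eq_one, one_mul]

theorem mul_reflection (h : IsGeneralizedDihedral N φ) {g : H} (hg : g ∈ N) : g * φ = φ * g⁻¹ := by
  rw [← h.conj_eq_inv g hg, h.inv_eq_self, mul_assoc φ, h.mul_self_mul]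

protected theorem subgroupOf (h : IsGeneralizedDihedral N φ) {G : Subgroup H} (hφ : φ ∈ G) :
    IsGeneralizedDihedral (N.subgroupOf G) ⟨φ, hφ⟩ where
  sq_eq_one := Subtype.ext h.sq_eq_one
  conj_eq_inv g hg := Subtype.ext (h.conj_eq_inv g hg)
  mul_mem_iff g := h.mul_mem_iff g

theorem prod_subgroupOf (h : IsGeneralizedDihedral N φ) (h' : IsGeneralizedDihedral M χ)
    {G : Subgroup (H × K)} (hG : ∀ x ∈ G, x.1 ∈ N ↔ x.2 ∈ M) (hφχ : (φ, χ) ∈ G) :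
    IsGeneralizedDihedral ((N.prod M).subgroupOf G) ⟨(φ, χ), hφχ⟩ where
  sq_eq_one := Subtype.ext (Prod.ext h.sq_eq_one h'.sq_eq_one)
  conj_eq_inv g hg :=
    Subtype.ext (Prod.ext (h.conj_eq_inv _ hg.1) (h'.conj_eq_inv _ hg.2))
  mul_mem_iff g := by
    change φ * g.1.1 ∈ N ∧ χ * g.1.2 ∈ M ↔ ¬(g.1.1 ∈ N ∧ g.1.2 ∈ M)
    have := hG g g.2
    rw [h.mul_mem_iff, h'.mul_mem_iff]
    tauto

theorem top_prod (h : IsGeneralizedDihedral N φ) (hK : ∀ k : K, k⁻¹ = k) :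
    IsGeneralizedDihedral ((⊤ : Subgroup K).prod N) (1, φ) where
  sq_eq_one := Prod.ext (one_pow 2) h.sq_eq_one
  conj_eq_inv g hg := Prod.ext (by simp [hK]) (h.conj_eq_inv _ hg.2)
  mul_mem_iff g := by simp [Subgroup.mem_prod, h.mul_mem_iff]

theorem nonempty_mulEquiv_dihedralGroup (h : IsGeneralizedDihedral N φ) {n : ℕ}
    (e : N ≃* Multiplicative (ZMod n)) : Nonempty (H ≃* DihedralGroup n) := by
  let ψ (i : ZMod n) : H := e.symm (.ofAdd i)
  have hψN (i : ZMod n) : ψ i ∈ N := (e.symm (.ofAdd i)).2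
  have ψ_add (i j : ZMod n) : ψ (i + j) = ψ i * ψ j := by simp [ψ, ofAdd_add]
  have ψ_sub (i j : ZMod n) : ψ (j - i) = (ψ i)⁻¹ * ψ j := by
    rw [eq_inv_mul_iff_mul_eq, ← ψ_add, add_sub_cancel]
  have exists_ψ {x : H} (hx : x ∈ N) : ∃ i, ψ i = x :=
    ⟨(e ⟨x, hx⟩).toAdd, by simp [ψ]⟩
  let F : DihedralGroup n →* H := MonoidHom.mk'
    (fun | r i => ψ i | sr i => φ * ψ i) <| by
      rintro (i | i) (j | j)
      · exact ψ_add i j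
      · change φ * ψ (j - i) = ψ i * (φ * ψ j)
        rw [ψ_sub, ← mul_assoc, ← mul_assoc, h.mul_reflection (hψN i)]
      · change φ * ψ (i + j) = φ * ψ i * ψ j
        rw [ψ_add, mul_assoc]
      · change ψ (j - i) = φ * ψ i * (φ * ψ j)
        rw [ψ_sub, mul_assoc, ← mul_assoc (ψ i), h.mul_reflection (hψN i), mul_assoc φ,
          h.mul_self_mul]
  have F_injective : Injective F := by
    refine (injective_iff_map_eq_one F).2 ?_
    rintro (i | i) hi
    · have : e.symm (.ofAdd i) = 1 := Subtype.ext hi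
      rw [one_def, r.injEq]
      simpa using this
    · have hφψ : φ * ψ i ∈ N := by rw [show φ * ψ i = 1 from hi]; exact N.one_mem
      exact absurd (hψN i) ((h.mul_mem_iff _).1 hφψ)
  have F_surjective : Surjective F := by
    intro x
    by_cases hx : x ∈ N
    · obtain ⟨i, hi⟩ := exists_ψ hx
      exact ⟨r i, hi⟩
    · obtain ⟨i, hi⟩ := exists_ψ ((h.mul_mem_iff x).2 hx)
      refine ⟨sr i, ?_⟩
      change φ * ψ i = x
      rw [hi, h.mul_self_mul]
  exact ⟨(MulEquiv.ofBijective F ⟨F_injective, F_surjective⟩).symm⟩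

end IsGeneralizedDihedral

section Rotations

/-- The cyclic subgroup of rotations of the dihedral group of order `2 * n`. -/
def rotations (n : ℕ) : Subgroup (DihedralGroup n) := Subgroup.zpowers (r 1)

variable {n : ℕ}

instance : IsCyclic (rotations n) := inferInstanceAs (IsCyclic (Subgroup.zpowers _))

instance : CommGroup (rotations n) := IsCyclic.commGroup

theorem r_mem_rotations (i : ZMod n) : r i ∈ rotations n :=
  Subgroup.mem_zpowers_iff.2 ⟨i.cast, by simp⟩

theorem sr_notMem_rotations (i : ZMod n) : sr i ∉ rotations n := by
  simp [rotations, Subgroup.mem_zpowers_iff]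

theorem card_rotations : Nat.card (rotations n) = n := by
  rw [rotations, Nat.card_zpowers, orderOf_r_one]

theorem isGeneralizedDihedral_rotations (i : ZMod n) :
    IsGeneralizedDihedral (rotations n) (sr i) where
  sq_eq_one := by rw [sq, sr_mul_self]
  conj_eq_inv := by
    rintro (j | j) hj
    · simp
    · exact absurd hj (sr_notMem_rotations j)
  mul_mem_iff := by
    rintro (j | j) <;> simp [r_mem_rotations, sr_notMem_rotations]

theorem exists_mulEquiv_zmod_of_le_rotations {B : Subgroup (DihedralGroup n)}
    (hB : B ≤ rotations n) : ∃ b : ℕ, b ∣ n ∧ Nonempty (B ≃* Multiplicative (ZMod b)) := by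
  simpa only [card_rotations] using
    exists_mulEquiv_zmod_of_injective (Subgroup.inclusion_injective hB)

theorem exists_mulEquiv_dihedralGroup_of_sr_mem {B : Subgroup (DihedralGroup n)} {i : ZMod n}
    (hi : sr i ∈ B) : ∃ b : ℕ, b ∣ n ∧ Nonempty (B ≃* DihedralGroup b) := by
  obtain ⟨b, hb, ⟨e⟩⟩ := exists_mulEquiv_zmod_of_injective
    (subgroupComap_injective B.subtype_injective (rotations n))
  rw [card_rotations] at hb
  have hdih := (isGeneralizedDihedral_rotations i).subgroupOf hi
  exact ⟨b, hb, hdih.nonempty_mulEquiv_dihedralGroup e⟩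

theorem r_mem_of_r_two_mul_mem (hn : Odd n) {B : Subgroup (DihedralGroup n)} {k : ZMod n}
    (hk : r (2 * k) ∈ B) : r k ∈ B := by
  obtain ⟨t, rfl⟩ := hn
  have h0 : (2 * t + 1 : ZMod (2 * t + 1)) = 0 := by exact_mod_cast ZMod.natCast_self (2 * t + 1)
  have : r (2 * k) ^ (t + 1) = r k := by
    rw [r_pow]
    congr 1
    push_cast
    linear_combination k * h0
  exact this ▸ B.pow_mem hk (t + 1)

theorem mem_of_conj_sr_mem (hn : Odd n) {B : Subgroup (DihedralGroup n)} {i : ZMod n}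
    (hi : sr i ∈ B) {x : DihedralGroup n} (hx : x * sr i * x⁻¹ ∈ B) : x ∈ B := by
  have hmul := B.mul_mem hx hi
  obtain k | k := x
  · refine r_mem_of_r_two_mul_mem hn ?_
    rw [r_mul_sr, inv_r, sr_mul_r, sr_mul_sr] at hmul
    convert hmul using 2
    ring
  · have hrot : r (i - k) ∈ B := by
      refine r_mem_of_r_two_mul_mem hn ?_
      rw [sr_mul_sr, inv_sr, r_mul_sr, sr_mul_sr] at hmul
      convert hmul using 2
      ring
    simpa using B.mul_mem hi (B.inv_mem hrot)

theorem sr_pow_of_odd {k : ℕ} (hk : Odd k) (i : ZMod n) : sr i ^ k = sr i := by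
  obtain ⟨t, rfl⟩ := hk
  rw [pow_succ, pow_mul, sq, sr_mul_self, one_pow, one_mul]

theorem nonempty_dihedralGroup_one_mulEquiv :
    Nonempty (DihedralGroup 1 ≃* Multiplicative (ZMod 2)) :=
  ⟨mulEquivOfPrimeCardEq (p := 2) DihedralGroup.nat_card (Nat.card_zmod 2)⟩

theorem nonempty_zmod_two_prod_dihedralGroup_mulEquiv (hn : Odd n) :
    Nonempty (Multiplicative (ZMod 2) × DihedralGroup n ≃* DihedralGroup (2 * n)) := by
  obtain ⟨e⟩ := nonempty_zmod_prod_zmod_mulEquiv_of_coprime (Nat.coprime_two_left.2 hn)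
  let eRot : rotations n ≃* Multiplicative (ZMod n) :=
    mulEquivOfCyclicCardEq (card_rotations.trans (Nat.card_zmod n).symm)
  have hdih : IsGeneralizedDihedral ((⊤ : Subgroup (Multiplicative (ZMod 2))).prod (rotations n))
      (1, sr 0) :=
    (isGeneralizedDihedral_rotations 0).top_prod (by decide)
  exact hdih.nonempty_mulEquiv_dihedralGroup <|
    ((Subgroup.prodEquiv _ _).trans (Subgroup.topEquiv.prodCongr eRot)).trans e

end Rotations

section Product

theorem eq_prod_comap_of_forall_mk_one_mem {H K : Type*} [Group H] [Group K]
    {G : Subgroup (H × K)} (hG : ∀ x y, (x, y) ∈ G → (x, 1) ∈ G) :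
    G = (G.comap (MonoidHom.inl H K)).prod (G.comap (MonoidHom.inr H K)) := by
  ext ⟨x, y⟩
  refine ⟨fun hxy ↦ ⟨hG x y hxy, ?_⟩, fun ⟨hx, hy⟩ ↦ ?_⟩
  · simpa using G.mul_mem (G.inv_mem (hG x y hxy)) hxy
  · simpa using G.mul_mem hx hy

variable {m n : ℕ} {G : Subgroup (DihedralGroup m × DihedralGroup n)}

theorem sr_one_mem_of_sr_r_mem (hn : Odd n) {i : ZMod m} {j : ZMod n} (hij : (sr i, r j) ∈ G) :
    (sr i, 1) ∈ G := by
  have : (sr i, r j) ^ n = (sr i, (1 : DihedralGroup n)) := by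
    rw [Prod.pow_mk, sr_pow_of_odd hn, r_pow, ZMod.natCast_self, mul_zero, r_zero]
  exact this ▸ G.pow_mem hij n

theorem exists_mulEquiv_dihedralGroup_prod_of_sr_r_mem (hm : Odd m) (hn : Odd n) {i : ZMod m}
    {j : ZMod n} (hij : (sr i, r j) ∈ G) :
    ∃ a b : ℕ, Odd a ∧ Odd b ∧
      (Nonempty (G ≃* DihedralGroup a × Multiplicative (ZMod b)) ∨
        Nonempty (G ≃* DihedralGroup a × DihedralGroup b)) := by
  have hi := sr_one_mem_of_sr_r_mem hn hij
  let A := G.comap (MonoidHom.inl (DihedralGroup m) (DihedralGroup n))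
  let B := G.comap (MonoidHom.inr (DihedralGroup m) (DihedralGroup n))
  have hGAB : G = A.prod B := eq_prod_comap_of_forall_mk_one_mem fun x y hxy ↦ by
    refine mem_of_conj_sr_mem (B := A) hm hi ?_
    simpa [A] using G.mul_mem (G.mul_mem hxy hi) (G.inv_mem hxy)
  let e : G ≃* A × B := (MulEquiv.subgroupCongr hGAB).trans (A.prodEquiv B)
  obtain ⟨a, ha, ⟨eA⟩⟩ := exists_mulEquiv_dihedralGroup_of_sr_mem (B := A) hi
  by_cases hB : B ≤ rotations n
  · obtain ⟨b, hb, ⟨eB⟩⟩ := exists_mulEquiv_zmod_of_le_rotations hB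
    exact ⟨a, b, hm.of_dvd_nat ha, hn.of_dvd_nat hb, .inl ⟨e.trans (eA.prodCongr eB)⟩⟩
  · obtain ⟨k | k, hk, hrot⟩ := SetLike.not_le_iff_exists.1 hB
    · exact absurd (r_mem_rotations k) hrot
    · obtain ⟨b, hb, ⟨eB⟩⟩ := exists_mulEquiv_dihedralGroup_of_sr_mem hk
      exact ⟨a, b, hm.of_dvd_nat ha, hn.of_dvd_nat hb, .inr ⟨e.trans (eA.prodCongr eB)⟩⟩

theorem exists_mulEquiv_dihedralGroup_prod_of_r_sr_mem (hm : Odd m) (hn : Odd n) {i : ZMod m}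
    {j : ZMod n} (hij : (r i, sr j) ∈ G) :
    ∃ a b : ℕ, Odd a ∧ Odd b ∧
      (Nonempty (G ≃* DihedralGroup a × Multiplicative (ZMod b)) ∨
        Nonempty (G ≃* DihedralGroup a × DihedralGroup b)) := by
  let swap : DihedralGroup m × DihedralGroup n ≃* DihedralGroup n × DihedralGroup m :=
    MulEquiv.prodComm
  have hji : (sr j, r i) ∈ G.map (swap : _ →* _) := ⟨_, hij, rfl⟩
  let e := swap.subgroupMap G
  obtain ⟨a, b, ha, hb, ⟨⟨f⟩⟩ | ⟨⟨f⟩⟩⟩ :=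
    exists_mulEquiv_dihedralGroup_prod_of_sr_r_mem hn hm hji
  · exact ⟨a, b, ha, hb, .inl ⟨e.trans f⟩⟩
  · exact ⟨a, b, ha, hb, .inr ⟨e.trans f⟩⟩

theorem exists_mulEquiv_subgroupOf_rotations_prod (hm : Odd m) (hn : Odd n)
    (G : Subgroup (DihedralGroup m × DihedralGroup n)) :
    ∃ a b : ℕ, Odd a ∧ Odd b ∧ Nonempty (((rotations m).prod (rotations n)).subgroupOf G ≃*
      Multiplicative (ZMod a) × Multiplicative (ZMod b)) := by
  have : NeZero m := ⟨hm.pos.ne'⟩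
  have : NeZero n := ⟨hn.pos.ne'⟩
  let ι : ((rotations m).prod (rotations n)).subgroupOf G →* rotations m × rotations n :=
    ((rotations m).prodEquiv (rotations n)).toMonoidHom.comp (G.subtype.subgroupComap _)
  have hι : Injective ι := ((rotations m).prodEquiv (rotations n)).injective.comp
    (subgroupComap_injective G.subtype_injective _)
  obtain ⟨a, b, hab, he⟩ := exists_mulEquiv_zmod_prod_zmod_of_injective hι
  rw [card_rotations, card_rotations] at hab
  obtain ⟨ha, hb⟩ := Nat.odd_mul.1 ((hm.mul hn).of_dvd_nat hab)
  exact ⟨a, b, ha, hb, he⟩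

theorem exists_mulEquiv_or_isGeneralizedDihedral (hm : Odd m) (hn : Odd n)
    (G : Subgroup (DihedralGroup m × DihedralGroup n)) :
    ∃ a b : ℕ, Odd a ∧ Odd b ∧
      (Nonempty (G ≃* Multiplicative (ZMod a) × Multiplicative (ZMod b)) ∨
      (∃ (N : Subgroup G) (φ : G), IsGeneralizedDihedral N φ ∧
        Nonempty (N ≃* Multiplicative (ZMod a) × Multiplicative (ZMod b))) ∨
      Nonempty (G ≃* DihedralGroup a × Multiplicative (ZMod b)) ∨
      Nonempty (G ≃* DihedralGroup a × DihedralGroup b)) := by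
  by_cases hsr : ∃ i j, (sr i, r j) ∈ G
  · obtain ⟨i, j, hij⟩ := hsr
    obtain ⟨a, b, ha, hb, h⟩ := exists_mulEquiv_dihedralGroup_prod_of_sr_r_mem hm hn hij
    exact ⟨a, b, ha, hb, .inr (.inr h)⟩
  by_cases hrs : ∃ i j, (r i, sr j) ∈ G
  · obtain ⟨i, j, hij⟩ := hrs
    obtain ⟨a, b, ha, hb, h⟩ := exists_mulEquiv_dihedralGroup_prod_of_r_sr_mem hm hn hij
    exact ⟨a, b, ha, hb, .inr (.inr h)⟩
  obtain ⟨a, b, ha, hb, ⟨e⟩⟩ := exists_mulEquiv_subgroupOf_rotations_prod hm hn G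
  refine ⟨a, b, ha, hb, ?_⟩
  have hG : ∀ x ∈ G, x.1 ∈ rotations m ↔ x.2 ∈ rotations n := by
    push Not at hsr hrs
    rintro ⟨i | i, j | j⟩ hx
    · simp only [r_mem_rotations]
    · exact absurd hx (hrs i j)
    · exact absurd hx (hsr i j)
    · simp only [sr_notMem_rotations]
  by_cases hss : ∃ i j, (sr i, sr j) ∈ G
  · obtain ⟨i, j, hij⟩ := hss
    exact .inr <| .inl ⟨_, _, (isGeneralizedDihedral_rotations i).prod_subgroupOf
      (isGeneralizedDihedral_rotations j) hG hij, ⟨e⟩⟩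
  · have hle : G ≤ (rotations m).prod (rotations n) := by
      push Not at hsr hss
      rintro ⟨i | i, j | j⟩ hx
      · exact ⟨r_mem_rotations i, r_mem_rotations j⟩
      · exact ⟨r_mem_rotations i, (hG _ hx).1 (r_mem_rotations i)⟩
      · exact absurd hx (hsr i j)
      · exact absurd hx (hss i j)
    rw [Subgroup.subgroupOf_eq_top.2 hle] at e
    exact .inl ⟨Subgroup.topEquiv.symm.trans e⟩

end Product

section Classification

instance : Unique (Multiplicative (ZMod 1)) := inferInstanceAs (Unique (Fin 1))

theorem eq_one_or_three_le_of_odd {k : ℕ} (hk : Odd k) : k = 1 ∨ 3 ≤ k := by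
  obtain ⟨t, rfl⟩ := hk
  lia

/-- The property of being one of the ten groups that occur as nontrivial subgroups of a product of
two dihedral groups of orders `2 * m` and `2 * n` with `m` and `n` odd. The last alternative is the
generalized dihedral group of a product of two cyclic groups; see `IsGeneralizedDihedral`. -/
def IsOddDihedralProductSubgroupType (H : Type*) [Group H] : Prop :=
  (Nonempty (H ≃* Multiplicative (ZMod 2))) ∨
  (∃ r : ℕ, Odd r ∧ 3 ≤ r ∧ Nonempty (H ≃* Multiplicative (ZMod r))) ∨
  (∃ r : ℕ, Odd r ∧ 3 ≤ r ∧ Nonempty (H ≃* Multiplicative (ZMod (2 * r)))) ∨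
  (Nonempty (H ≃* Multiplicative (ZMod 2) × Multiplicative (ZMod 2))) ∨
  (∃ r : ℕ, Odd r ∧ 3 ≤ r ∧ Nonempty (H ≃* DihedralGroup r)) ∨
  (∃ r : ℕ, Odd r ∧ 3 ≤ r ∧ Nonempty (H ≃* DihedralGroup (2 * r))) ∨
  (∃ r s : ℕ, Odd r ∧ 3 ≤ r ∧ Odd s ∧ 3 ≤ s ∧
    Nonempty (H ≃* Multiplicative (ZMod r) × Multiplicative (ZMod s))) ∨
  (∃ r s : ℕ, Odd r ∧ 3 ≤ r ∧ Odd s ∧ 3 ≤ s ∧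
    Nonempty (H ≃* DihedralGroup r × Multiplicative (ZMod s))) ∨
  (∃ r s : ℕ, Odd r ∧ 3 ≤ r ∧ Odd s ∧ 3 ≤ s ∧
    Nonempty (H ≃* DihedralGroup r × DihedralGroup s)) ∨
  (∃ r s : ℕ, Odd r ∧ 3 ≤ r ∧ Odd s ∧ 3 ≤ s ∧
    ∃ N : Subgroup H,
      Nonempty (N ≃* Multiplicative (ZMod r) × Multiplicative (ZMod s)) ∧
      N.index = 2 ∧
      ∃ φ : H, φ ∉ N ∧ φ ^ 2 = 1 ∧ ∀ g ∈ N, φ * g * φ⁻¹ = g⁻¹)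

namespace IsOddDihedralProductSubgroupType

variable {H : Type*} [Group H] {a b : ℕ}

theorem of_zmod [Nontrivial H] (ha : Odd a) (e : H ≃* Multiplicative (ZMod a)) :
    IsOddDihedralProductSubgroupType H := by
  obtain rfl | ha₃ := eq_one_or_three_le_of_odd ha
  · exact absurd e.toEquiv.subsingleton (not_subsingleton H)
  · exact .inr <| .inl ⟨a, ha, ha₃, ⟨e⟩⟩

theorem of_dihedralGroup (ha : Odd a) (e : H ≃* DihedralGroup a) :
    IsOddDihedralProductSubgroupType H := by
  obtain rfl | ha₃ := eq_one_or_three_le_of_odd ha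
  · exact .inl (nonempty_dihedralGroup_one_mulEquiv.map e.trans)
  · exact .inr <| .inr <| .inr <| .inr <| .inl ⟨a, ha, ha₃, ⟨e⟩⟩

theorem of_zmod_prod_zmod [Nontrivial H] (ha : Odd a) (hb : Odd b)
    (e : H ≃* Multiplicative (ZMod a) × Multiplicative (ZMod b)) :
    IsOddDihedralProductSubgroupType H := by
  obtain rfl | ha₃ := eq_one_or_three_le_of_odd ha
  · exact of_zmod hb (e.trans .uniqueProd)
  obtain rfl | hb₃ := eq_one_or_three_le_of_odd hb
  · exact of_zmod ha (e.trans .prodUnique)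
  exact .inr <| .inr <| .inr <| .inr <| .inr <| .inr <| .inl ⟨a, b, ha, ha₃, hb, hb₃, ⟨e⟩⟩

theorem of_isGeneralizedDihedral {N : Subgroup H} {φ : H} (h : IsGeneralizedDihedral N φ)
    (ha : Odd a) (hb : Odd b) (e : N ≃* Multiplicative (ZMod a) × Multiplicative (ZMod b)) :
    IsOddDihedralProductSubgroupType H := by
  obtain rfl | ha₃ := eq_one_or_three_le_of_odd ha
  · obtain ⟨f⟩ := h.nonempty_mulEquiv_dihedralGroup (e.trans .uniqueProd)
    exact of_dihedralGroup hb f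
  obtain rfl | hb₃ := eq_one_or_three_le_of_odd hb
  · obtain ⟨f⟩ := h.nonempty_mulEquiv_dihedralGroup (e.trans .prodUnique)
    exact of_dihedralGroup ha f
  iterate 9 right
  exact ⟨a, b, ha, ha₃, hb, hb₃, N, ⟨e⟩, h.index_eq_two, φ, h.notMem, h.sq_eq_one, h.conj_eq_inv⟩

theorem of_dihedralGroup_prod_zmod (ha : Odd a) (hb : Odd b)
    (e : H ≃* DihedralGroup a × Multiplicative (ZMod b)) :
    IsOddDihedralProductSubgroupType H := by
  obtain rfl | hb₃ := eq_one_or_three_le_of_odd hb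
  · exact of_dihedralGroup ha (e.trans .prodUnique)
  obtain rfl | ha₃ := eq_one_or_three_le_of_odd ha
  · obtain ⟨d⟩ := nonempty_dihedralGroup_one_mulEquiv
    obtain ⟨c⟩ := nonempty_zmod_prod_zmod_mulEquiv_of_coprime (Nat.coprime_two_left.2 hb)
    exact .inr <| .inr <| .inl ⟨b, hb, hb₃, ⟨(e.trans (d.prodCongr (.refl _))).trans c⟩⟩
  · iterate 7 right
    exact .inl ⟨a, b, ha, ha₃, hb, hb₃, ⟨e⟩⟩

theorem of_zmod_two_prod_dihedralGroup (ha : Odd a)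
    (e : H ≃* Multiplicative (ZMod 2) × DihedralGroup a) :
    IsOddDihedralProductSubgroupType H := by
  obtain rfl | ha₃ := eq_one_or_three_le_of_odd ha
  · obtain ⟨d⟩ := nonempty_dihedralGroup_one_mulEquiv
    exact .inr <| .inr <| .inr <| .inl ⟨e.trans ((MulEquiv.refl _).prodCongr d)⟩
  · obtain ⟨c⟩ := nonempty_zmod_two_prod_dihedralGroup_mulEquiv ha
    exact .inr <| .inr <| .inr <| .inr <| .inr <| .inl ⟨a, ha, ha₃, ⟨e.trans c⟩⟩

theorem of_dihedralGroup_prod_dihedralGroup (ha : Odd a) (hb : Odd b)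
    (e : H ≃* DihedralGroup a × DihedralGroup b) : IsOddDihedralProductSubgroupType H := by
  obtain ⟨d⟩ := nonempty_dihedralGroup_one_mulEquiv
  obtain rfl | ha₃ := eq_one_or_three_le_of_odd ha
  · exact of_zmod_two_prod_dihedralGroup hb (e.trans (d.prodCongr (.refl _)))
  obtain rfl | hb₃ := eq_one_or_three_le_of_odd hb
  · exact of_zmod_two_prod_dihedralGroup ha ((e.trans .prodComm).trans (d.prodCongr (.refl _)))
  iterate 8 right
  exact .inl ⟨a, b, ha, ha₃, hb, hb₃, ⟨e⟩⟩

end IsOddDihedralProductSubgroupType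

end Classification

theorem stmt0_general {m n : ℕ} (hm : Odd m) (hn : Odd n)
    (G : Subgroup (DihedralGroup m × DihedralGroup n)) (hG : G ≠ ⊥) :
    IsOddDihedralProductSubgroupType G := by
  have : Nontrivial G := G.nontrivial_iff_ne_bot.2 hG
  obtain ⟨a, b, ha, hb, ⟨⟨e⟩⟩ | ⟨N, φ, h, ⟨e⟩⟩ | ⟨⟨e⟩⟩ | ⟨⟨e⟩⟩⟩ :=
    exists_mulEquiv_or_isGeneralizedDihedral hm hn G
  · exact .of_zmod_prod_zmod ha hb e
  · exact .of_isGeneralizedDihedral h ha hb e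
  · exact .of_dihedralGroup_prod_zmod ha hb e
  · exact .of_dihedralGroup_prod_dihedralGroup ha hb e

theorem stmt0 (m : ℕ) (hm : 3 ≤ m) (hmodd : Odd m)
    (G : Subgroup (DihedralGroup m × DihedralGroup m)) (hG : G ≠ ⊥) :
    (Nonempty (G ≃* Multiplicative (ZMod 2))) ∨
    (∃ r : ℕ, Odd r ∧ 3 ≤ r ∧ Nonempty (G ≃* Multiplicative (ZMod r))) ∨
    (∃ r : ℕ, Odd r ∧ 3 ≤ r ∧ Nonempty (G ≃* Multiplicative (ZMod (2 * r)))) ∨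
    (Nonempty (G ≃* Multiplicative (ZMod 2) × Multiplicative (ZMod 2))) ∨
    (∃ r : ℕ, Odd r ∧ 3 ≤ r ∧ Nonempty (G ≃* DihedralGroup r)) ∨
    (∃ r : ℕ, Odd r ∧ 3 ≤ r ∧ Nonempty (G ≃* DihedralGroup (2 * r))) ∨
    (∃ r s : ℕ, Odd r ∧ 3 ≤ r ∧ Odd s ∧ 3 ≤ s ∧
      Nonempty (G ≃* Multiplicative (ZMod r) × Multiplicative (ZMod s))) ∨
    (∃ r s : ℕ, Odd r ∧ 3 ≤ r ∧ Odd s ∧ 3 ≤ s ∧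
      Nonempty (G ≃* DihedralGroup r × Multiplicative (ZMod s))) ∨
    (∃ r s : ℕ, Odd r ∧ 3 ≤ r ∧ Odd s ∧ 3 ≤ s ∧
      Nonempty (G ≃* DihedralGroup r × DihedralGroup s)) ∨
    (∃ r s : ℕ, Odd r ∧ 3 ≤ r ∧ Odd s ∧ 3 ≤ s ∧
      ∃ N : Subgroup G,
        Nonempty (N ≃* Multiplicative (ZMod r) × Multiplicative (ZMod s)) ∧
        N.index = 2 ∧
        ∃ φ : G, φ ∉ N ∧ φ ^ 2 = 1 ∧ ∀ g ∈ N, φ * g * φ⁻¹ = g⁻¹) := by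
  exact stmt0_general hmodd hmodd G hG
end

section
/- Let m ≥ 3 be odd and let G be a subgroup of DihedralGroup m × DihedralGroup m. (i) If (x, y) ∈ G where x is a reflection (x = sr a for some a) and y is a rotation (y = r b for some b), then (1, y) ∈ G and (x, 1) ∈ G. (ii) If (x, y) ∈ G where x is a rotation (x = r a for some a) and y is a reflection (y = sr b for some b), then (x, 1) ∈ G and (1, y) ∈ G. -/
/-!
Raising `(x, y)` to the power `orderOf y` kills the second coordinate, and when `orderOf x` and
`orderOf y` are coprime a further power restores the first. A reflection has order two, while a
rotation of a regular `n`-gon with `n` odd has odd order.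
-/

section SubmonoidClass

variable {M N S : Type*} [Monoid M] [Monoid N] [SetLike S (M × N)] [SubmonoidClass S (M × N)]
  {s : S} {x : M} {y : N}

theorem mk_one_mem_of_coprime_orderOf (hxy : (orderOf x).Coprime (orderOf y))
    (h : (x, y) ∈ s) : (x, (1 : N)) ∈ s := by
  obtain ⟨k, hk⟩ := exists_pow_eq_self_of_coprime hxy.symm
  have hpow : ((x, y) ^ orderOf y) ^ k = (x, 1) := by
    rw [Prod.pow_mk, Prod.pow_mk, pow_orderOf_eq_one, one_pow, hk]
  exact hpow ▸ pow_mem (pow_mem h _) k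

theorem one_mk_mem_of_coprime_orderOf (hxy : (orderOf x).Coprime (orderOf y))
    (h : (x, y) ∈ s) : ((1 : M), y) ∈ s := by
  obtain ⟨k, hk⟩ := exists_pow_eq_self_of_coprime hxy
  have hpow : ((x, y) ^ orderOf x) ^ k = (1, y) := by
    rw [Prod.pow_mk, Prod.pow_mk, pow_orderOf_eq_one, one_pow, hk]
  exact hpow ▸ pow_mem (pow_mem h _) k

end SubmonoidClass

section Dihedral

open DihedralGroup

variable {m n : ℕ}

theorem orderOf_r_dvd (b : ZMod n) : orderOf (r b) ∣ n :=
  orderOf_dvd_of_pow_eq_one <| by rw [r_pow, ZMod.natCast_self, mul_zero, r_zero]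

theorem coprime_orderOf_sr_orderOf_r (hn : Odd n) (a : ZMod m) (b : ZMod n) :
    (orderOf (sr a)).Coprime (orderOf (r b)) := by
  rw [orderOf_sr, Nat.coprime_two_left]
  exact hn.of_dvd_nat (orderOf_r_dvd b)

theorem stmt1_general (G : Subgroup (DihedralGroup m × DihedralGroup n)) :
    (Odd n → ∀ (a : ZMod m) (b : ZMod n), (sr a, r b) ∈ G →
      ((1 : DihedralGroup m), r b) ∈ G ∧ (sr a, (1 : DihedralGroup n)) ∈ G) ∧
    (Odd m → ∀ (a : ZMod m) (b : ZMod n), (r a, sr b) ∈ G →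
      (r a, (1 : DihedralGroup n)) ∈ G ∧ ((1 : DihedralGroup m), sr b) ∈ G) := by
  refine ⟨fun hn a b h => ?_, fun hm a b h => ?_⟩
  · have hab := coprime_orderOf_sr_orderOf_r hn a b
    exact ⟨one_mk_mem_of_coprime_orderOf hab h, mk_one_mem_of_coprime_orderOf hab h⟩
  · have hab := (coprime_orderOf_sr_orderOf_r hm b a).symm
    exact ⟨mk_one_mem_of_coprime_orderOf hab h, one_mk_mem_of_coprime_orderOf hab h⟩

end Dihedral

theorem stmt1 (m : ℕ) (hm : 3 ≤ m) (hmodd : Odd m)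
    (G : Subgroup (DihedralGroup m × DihedralGroup m)) :
    (∀ a b : ZMod m, (DihedralGroup.sr a, DihedralGroup.r b) ∈ G →
      ((1 : DihedralGroup m), DihedralGroup.r b) ∈ G ∧
      (DihedralGroup.sr a, (1 : DihedralGroup m)) ∈ G) ∧
    (∀ a b : ZMod m, (DihedralGroup.r a, DihedralGroup.sr b) ∈ G →
      (DihedralGroup.r a, (1 : DihedralGroup m)) ∈ G ∧
      ((1 : DihedralGroup m), DihedralGroup.sr b) ∈ G) :=
  (stmt1_general G).imp (fun hrot => hrot hmodd) (fun hrot => hrot hmodd)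
end

section
/- Let m ≥ 3 be odd and let G be a subgroup of DihedralGroup m × DihedralGroup m. Suppose (sr k, 1) ∈ G for some k in ZMod m, and (r a, r b) ∈ G for some a, b in ZMod m. Then (r a, 1) ∈ G and (1, r b) ∈ G. -/
/-!
If `s` inverts `x` and `t` commutes with `y`, conjugation by `(s, t)` turns `(x, y)` into `(x⁻¹, y)`,
and the product of these two elements is `(1, y ^ 2)`. When `y` has odd order it is a power of its
square, so `(1, y)` lies in every subgroup containing `(s, t)` and `(x, y)`. In a dihedral group,
reflections invert rotations.
-/

theorem mem_of_pow_mem_of_coprime_orderOf {M : Type*} [Monoid M] {S : Submonoid M} {y : M} {n : ℕ}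
    (hn : n.Coprime (orderOf y)) (hy : y ^ n ∈ S) : y ∈ S := by
  obtain ⟨k, hk⟩ := exists_pow_eq_self_of_coprime hn
  exact hk ▸ S.pow_mem hy k

section Group

variable {A B : Type*} [Group A] [Group B]

theorem mem_of_semiconjBy {K : Subgroup A} {g x y : A} (h : SemiconjBy g x y) (hg : g ∈ K)
    (hx : x ∈ K) : y ∈ K :=
  (K.mul_mem_cancel_right hg).mp (h.eq ▸ K.mul_mem hg hx)

theorem one_sq_mem_of_semiconjBy_inv {G : Subgroup (A × B)} {s x : A} {t y : B}
    (hsx : SemiconjBy s x x⁻¹) (hty : Commute t y) (hst : (s, t) ∈ G) (hxy : (x, y) ∈ G) :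
    ((1 : A), y ^ 2) ∈ G := by
  have hinv : (x⁻¹, y) ∈ G := mem_of_semiconjBy (.prod hsx hty.semiconjBy) hst hxy
  simpa [sq] using G.mul_mem hxy hinv

theorem stmt2_general {G : Subgroup (A × B)} {s x : A} {t y : B} (hsx : SemiconjBy s x x⁻¹)
    (hty : Commute t y) (hy : Odd (orderOf y)) (hst : (s, t) ∈ G) (hxy : (x, y) ∈ G) :
    (x, (1 : B)) ∈ G ∧ ((1 : A), y) ∈ G := by
  have hright : ((1 : A), y) ∈ G :=
    mem_of_pow_mem_of_coprime_orderOf (S := (G.comap (MonoidHom.inr A B)).toSubmonoid)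
      hy.coprime_two_left (one_sq_mem_of_semiconjBy_inv hsx hty hst hxy)
  have hleft : (x, (1 : B)) ∈ G := by simpa using G.div_mem hxy hright
  exact ⟨hleft, hright⟩

end Group

section Dihedral

variable {m : ℕ}

theorem semiconjBy_sr_r_inv (k a : ZMod m) :
    SemiconjBy (DihedralGroup.sr k) (DihedralGroup.r a) (DihedralGroup.r a)⁻¹ := by
  simp [SemiconjBy]

theorem odd_orderOf_r (hm : Odd m) (b : ZMod m) : Odd (orderOf (DihedralGroup.r b)) :=
  hm.of_dvd_nat (orderOf_dvd_of_pow_eq_one (by simp [DihedralGroup.r_pow]))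

end Dihedral

theorem stmt2 (m : ℕ) (hm : 3 ≤ m) (hmodd : Odd m)
    (G : Subgroup (DihedralGroup m × DihedralGroup m))
    (k : ZMod m) (hk : (DihedralGroup.sr k, (1 : DihedralGroup m)) ∈ G)
    (a b : ZMod m) (hab : (DihedralGroup.r a, DihedralGroup.r b) ∈ G) :
    (DihedralGroup.r a, (1 : DihedralGroup m)) ∈ G ∧
    ((1 : DihedralGroup m), DihedralGroup.r b) ∈ G :=
  stmt2_general (semiconjBy_sr_r_inv k a) (Commute.one_left _) (odd_orderOf_r hmodd b) hk hab
end

section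
/- Let X be a finite type with at least 7 elements and let α, β be permutations of X such that α^2 = 1, β^2 = 1, α*β = β*α, and each of α, β, and α*β has at most 2 fixed points. Then there exists v in X such that the four points v, α v, β v, (α*β) v are pairwise distinct. -/
/-!
Commuting with `β` makes `β` preserve moved points of `α`, and `α v = β v` says that `α (β v) = v`
because `α` is an involution. Hence the four points are distinct as soon as `v` is moved by each of
`α`, `β` and `α ∘ β`, and such a `v` exists because the three fixed point sets are too small to
cover `X`.
-/

open Cardinal Function

theorem exists_notMem_of_mk_add_mk_add_mk_lt {X : Type*} {r s t : Set X}
    (hcard : #r + #s + #t < #X) : ∃ x, x ∉ r ∧ x ∉ s ∧ x ∉ t := by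
  have hunion : #↑(r ∪ s ∪ t) < #(Set.univ : Set X) :=
    calc #↑(r ∪ s ∪ t)
      _ ≤ #↑(r ∪ s) + #t := mk_union_le _ _
      _ ≤ #r + #s + #t := by
        gcongr
        exact mk_union_le _ _
      _ < #(Set.univ : Set X) := by rwa [mk_univ]
  obtain ⟨x, -, hx⟩ := sdiff_nonempty_of_mk_lt_mk hunion
  exact ⟨x, by simpa only [Set.mem_union, not_or, and_assoc] using hx⟩

theorem mk_add_mk_add_mk_lt_mk_iff {X : Type*} [Fintype X] {r s t : Set X} :
    #r + #s + #t < #X ↔ r.ncard + s.ncard + t.ncard < Fintype.card X := by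
  simp only [mk_fintype X, ← Set.cast_ncard (Set.toFinite _)]
  norm_cast

theorem isFixedPt_apply_iff_of_commute {X : Type*} {f g : X → X} (hg : Injective g)
    (hfg : Function.Commute f g) {x : X} : IsFixedPt f (g x) ↔ IsFixedPt f x := by
  rw [IsFixedPt, hfg.eq, hg.eq_iff, IsFixedPt]

theorem apply_eq_apply_iff_isFixedPt_comp {X : Type*} {f g : X → X} (hf : Involutive f) {x : X} :
    f x = g x ↔ IsFixedPt (f ∘ g) x := by
  rw [hf.eq_iff, eq_comm, IsFixedPt, comp_apply]

theorem involutive_of_sq_eq_one {X : Type*} {σ : Equiv.Perm X} (hσ : σ ^ 2 = 1) :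
    Involutive σ := fun x ↦ by
  rw [← Equiv.Perm.mul_apply, ← pow_two, hσ, Equiv.Perm.one_apply]

theorem stmt7_general {X : Type*} {α β : X → X} (hα : Involutive α) (hβ : Injective β)
    (hcomm : Function.Commute α β)
    (hcard : #(fixedPoints α) + #(fixedPoints β) + #(fixedPoints (α ∘ β)) < #X) :
    ∃ v : X, v ≠ α v ∧ v ≠ β v ∧ v ≠ (α ∘ β) v ∧
      α v ≠ β v ∧ α v ≠ (α ∘ β) v ∧ β v ≠ (α ∘ β) v := by
  obtain ⟨v, hvα, hvβ, hvαβ⟩ := exists_notMem_of_mk_add_mk_add_mk_lt hcard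
  have hαβ : α v ≠ β v := mt (apply_eq_apply_iff_isFixedPt_comp hα).mp hvαβ
  have hα_αβ : α v ≠ (α ∘ β) v := hα.injective.ne (Ne.symm hvβ)
  have hβ_αβ : β v ≠ (α ∘ β) v := Ne.symm (mt (isFixedPt_apply_iff_of_commute hβ hcomm).mp hvα)
  exact ⟨v, Ne.symm hvα, Ne.symm hvβ, Ne.symm hvαβ, hαβ, hα_αβ, hβ_αβ⟩

theorem stmt7 (X : Type*) [Fintype X] (hcard : 7 ≤ Fintype.card X)
    (α β : Equiv.Perm X) (hα : α ^ 2 = 1) (hβ : β ^ 2 = 1)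
    (hcomm : α * β = β * α)
    (hfα : {x | α x = x}.ncard ≤ 2) (hfβ : {x | β x = x}.ncard ≤ 2)
    (hfαβ : {x | (α * β) x = x}.ncard ≤ 2) :
    ∃ v : X, v ≠ α v ∧ v ≠ β v ∧ v ≠ (α * β) v ∧
      α v ≠ β v ∧ α v ≠ (α * β) v ∧ β v ≠ (α * β) v := by
  have hsum : {x | α x = x}.ncard + {x | β x = x}.ncard + {x | (α * β) x = x}.ncard <
      Fintype.card X := by lia
  exact stmt7_general (involutive_of_sq_eq_one hα) β.injective (Equiv.congr_fun hcomm)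
    (mk_add_mk_add_mk_lt_mk_iff.mpr hsum)
end

section
/- Let X be a finite type and let α, β be permutations of X with α*β = β*α such that the cyclic subgroups generated by α and by β intersect trivially, and such that every permutation of the form α^i * β^j (i, j integers) which is not the identity has at most 3 fixed points. Let v in X be such that the orbit of v under the cyclic subgroup generated by α has exactly r elements and the orbit of v under the cyclic subgroup generated by β has exactly s elements, where r ≥ 3, s ≥ 3, and not both r = 3 and s = 3. Then the intersection of these two orbits equals {v}. -/
/-!
If `h • v = k • v` with `h ∈ H` and `k ∈ K`, then `h⁻¹ * k` fixes `v`. As it commutes with `H` and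
with `K`, it fixes every point of both orbits of `v`, one of which has more points than a nontrivial
element may fix. So `h = k`, and this element lies in `H ⊓ K = ⊥`.
-/

open MulAction Subgroup

section GroupAction

variable {G X : Type*} [Group G] [MulAction G X] {H K : Subgroup G} {g : G} {v : X}

theorem orbit_subset_fixedBy_of_mem_centralizer (hg : g ∈ centralizer (H : Set G))
    (hv : g ∈ stabilizer G v) : orbit H v ⊆ fixedBy X g := by
  rintro _ ⟨⟨h, hh⟩, rfl⟩
  calc g • h • v = h • g • v := by rw [smul_smul, ← hg h hh, mul_smul]
    _ = h • v := by rw [mem_stabilizer_iff.1 hv]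

theorem eq_one_of_mem_stabilizer_of_encard_fixedBy_lt (hg : g ∈ centralizer (H : Set G))
    (hfix : g ≠ 1 → (fixedBy X g).encard < (orbit H v).encard) (hv : g ∈ stabilizer G v) :
    g = 1 := by
  by_contra hne
  exact (hfix hne).not_ge (Set.encard_le_encard (orbit_subset_fixedBy_of_mem_centralizer hg hv))

theorem orbit_inter_orbit_eq_singleton (hdisj : Disjoint H K)
    (hstab : ∀ h ∈ H, ∀ k ∈ K, h * k ∈ stabilizer G v → h * k = 1) :
    orbit H v ∩ orbit K v = {v} := by
  refine Set.Subset.antisymm ?_ (Set.singleton_subset_iff.2 ⟨mem_orbit_self v, mem_orbit_self v⟩)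
  rintro _ ⟨⟨⟨h, hh⟩, rfl⟩, ⟨⟨k, hk⟩, hkv : k • v = h • v⟩⟩
  have hmul : h⁻¹ * k = 1 := hstab h⁻¹ (inv_mem hh) k hk <| by
    rw [mem_stabilizer_iff, mul_smul, hkv, inv_smul_smul]
  have hhk : h = k := inv_mul_eq_one.1 hmul
  have hone : h = 1 := disjoint_def.1 hdisj hh (hhk ▸ hk)
  exact (congrArg (· • v) hone).trans (one_smul G v)

theorem stmt10_general [IsMulCommutative H] [IsMulCommutative K]
    (hcomm : H ≤ centralizer (K : Set G)) (hdisj : Disjoint H K) {n : ℕ∞}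
    (hfix : ∀ h ∈ H, ∀ k ∈ K, h * k ≠ 1 → (fixedBy X (h * k)).encard ≤ n)
    (horb : n < (orbit H v).encard ∨ n < (orbit K v).encard) :
    orbit H v ∩ orbit K v = {v} := by
  refine orbit_inter_orbit_eq_singleton hdisj fun h hh k hk ↦ ?_
  obtain hH | hK := horb
  · exact eq_one_of_mem_stabilizer_of_encard_fixedBy_lt
      (mul_mem (le_centralizer H hh) (le_centralizer_iff.1 hcomm hk))
      fun hne ↦ (hfix h hh k hk hne).trans_lt hH
  · exact eq_one_of_mem_stabilizer_of_encard_fixedBy_lt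
      (mul_mem (hcomm hh) (le_centralizer K hk)) fun hne ↦ (hfix h hh k hk hne).trans_lt hK

end GroupAction

theorem zpowers_le_centralizer_zpowers {G : Type*} [Group G] {a b : G} (hab : Commute a b) :
    zpowers a ≤ centralizer (zpowers b : Set G) := by
  rintro _ ⟨i, rfl⟩ _ ⟨j, rfl⟩
  exact (hab.zpow_zpow i j).symm

theorem setOf_exists_mem_apply_eq_orbit {X : Type*} (H : Subgroup (Equiv.Perm X)) (v : X) :
    {x | ∃ g ∈ H, g v = x} = orbit H v :=
  Set.ext fun _ ↦ by simp only [Set.mem_ofPred_eq, mem_orbit_iff, Subtype.exists,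
    mk_smul, Equiv.Perm.smul_def, exists_prop]

theorem stmt10 (X : Type*) [Fintype X] (α β : Equiv.Perm X) (hcomm : α * β = β * α)
    (htriv : Subgroup.zpowers α ⊓ Subgroup.zpowers β = ⊥)
    (hfix : ∀ i j : ℤ, α ^ i * β ^ j ≠ 1 → {x | (α ^ i * β ^ j) x = x}.ncard ≤ 3)
    (r s : ℕ) (hr : 3 ≤ r) (hs : 3 ≤ s) (hrs : ¬(r = 3 ∧ s = 3))
    (v : X)
    (horba : {x | ∃ g ∈ Subgroup.zpowers α, g v = x}.ncard = r)
    (horbb : {x | ∃ g ∈ Subgroup.zpowers β, g v = x}.ncard = s) :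
    {x | ∃ g ∈ Subgroup.zpowers α, g v = x} ∩
      {x | ∃ g ∈ Subgroup.zpowers β, g v = x} = {v} := by
  simp only [setOf_exists_mem_apply_eq_orbit] at horba horbb ⊢
  have hfix' (i j : ℤ) (hne : α ^ i * β ^ j ≠ 1) : (fixedBy X (α ^ i * β ^ j)).encard ≤ (3 : ℕ) :=
    Set.encard_le_coe_iff_finite_ncard_le.2 ⟨Set.toFinite _, hfix i j hne⟩
  have horb : (3 : ℕ) < (orbit (zpowers α) v).encard ∨ (3 : ℕ) < (orbit (zpowers β) v).encard := by
    simp only [← (Set.toFinite (orbit _ v)).cast_ncard_eq, Nat.cast_lt, horba, horbb]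
    omega
  exact stmt10_general (zpowers_le_centralizer_zpowers hcomm) (disjoint_iff.2 htriv)
    (forall_mem_zpowers.2 fun i ↦ forall_mem_zpowers.2 fun j ↦ hfix' i j) horb
end

section
/- Let α, β, γ be permutations of a type X with γ^2 = 1, α*γ = γ*α⁻¹, β*γ = γ*β, and α*β = β*α. If for some integers i, j and some v in X the permutation γ*α^i*β^j satisfies (γ*α^i*β^j) v = v and (γ*α^i*β^j) ((α*β) v) = (α*β) v, then α^2 v = v. -/
/-!
The permutation `ρ = γ * α ^ i * β ^ j` inverts `α` and commutes with `β`, just as `γ` does, so it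
acts on the orbit of its fixed point `v` as a reflection: `ρ` sends `(α * β) v` to `(α⁻¹ * β) v`.
If `(α * β) v` is fixed too, these two points agree, and cancelling `β` gives `α v = α⁻¹ v`.
-/

theorem smul_smul_eq_of_semiconjBy {M X : Type*} [Monoid M] [MulAction M X] {r a b : M} {v : X}
    (hr : SemiconjBy r a b) (hv : r • v = v) : r • a • v = b • v := by
  rw [smul_smul, hr.eq, mul_smul, hv]

section Group

variable {G X : Type*} [Group G] [MulAction G X] {α β γ : G} {v : X}

theorem semiconjBy_mul_zpow_mul_zpow (hγα : SemiconjBy γ α α⁻¹) (hγβ : Commute γ β)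
    (hαβ : Commute α β) (i j : ℤ) :
    SemiconjBy (γ * α ^ i * β ^ j) (α * β) (α⁻¹ * β) := by
  have hα : Commute (α ^ i) (α * β) := ((Commute.refl α).mul_right hαβ).zpow_left i
  have hβ : Commute (β ^ j) (α * β) := (hαβ.symm.mul_right (Commute.refl β)).zpow_left j
  exact ((hγα.mul_right hγβ).mul_left hα).mul_left hβ

theorem sq_smul_eq_self_of_mul_smul_eq_inv_mul_smul (hαβ : Commute α β)
    (h : (α * β) • v = (α⁻¹ * β) • v) : α ^ 2 • v = v := by
  have hinv : α • v = α⁻¹ • v := by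
    rwa [hαβ.eq, hαβ.inv_left.eq, mul_smul, mul_smul, smul_left_cancel_iff] at h
  rwa [eq_inv_smul_iff, smul_smul, ← pow_two] at hinv

theorem stmt12_general (hγα : SemiconjBy γ α α⁻¹) (hγβ : Commute γ β) (hαβ : Commute α β)
    (i j : ℤ) (hv : (γ * α ^ i * β ^ j) • v = v)
    (hαβv : (γ * α ^ i * β ^ j) • (α * β) • v = (α * β) • v) :
    α ^ 2 • v = v := by
  have hρ := semiconjBy_mul_zpow_mul_zpow hγα hγβ hαβ i j
  have h : (α * β) • v = (α⁻¹ * β) • v := hαβv.symm.trans (smul_smul_eq_of_semiconjBy hρ hv)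
  exact sq_smul_eq_self_of_mul_smul_eq_inv_mul_smul hαβ h

end Group

theorem stmt12 (X : Type*) (α β γ : Equiv.Perm X) (hγ : γ ^ 2 = 1)
    (h1 : α * γ = γ * α⁻¹) (h2 : β * γ = γ * β) (h3 : α * β = β * α)
    (i j : ℤ) (v : X)
    (hv1 : (γ * α ^ i * β ^ j) v = v)
    (hv2 : (γ * α ^ i * β ^ j) ((α * β) v) = (α * β) v) :
    (α ^ 2) v = v := by
  have hγα : SemiconjBy γ α α⁻¹ := by simpa only [inv_inv] using SemiconjBy.inv_right h1.symm
  exact stmt12_general hγα h2.symm h3 i j hv1 hv2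
end

section
/- Let α, β, μ be permutations of a type X with μ^2 = 1, α*μ = μ*α⁻¹, β*μ = μ*β⁻¹, and α*β = β*α. If for some integers i, j and some v in X the permutation μ*α^i*β^j satisfies (μ*α^i*β^j) v = v and (μ*α^i*β^j) ((α*β) v) = (α*β) v, then α^(−2) v = β^2 v. -/
/-!
Conjugation by `μ * α ^ i * β ^ j` inverts `γ = α * β`. Hence, if this element fixes `v`, it sends
`γ v` to `γ⁻¹ v`; if it also fixes `γ v`, then `γ ^ 2 v = v`, that is `α ^ 2 (β ^ 2 v) = v`.
-/

theorem semiconjBy_mul_inv_of_commute {M : Type*} [DivisionMonoid M] {s x y : M}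
    (hxy : Commute x y) (hx : SemiconjBy s x⁻¹ x) (hy : SemiconjBy s y⁻¹ y) :
    SemiconjBy s (x * y)⁻¹ (x * y) := by
  rw [hxy.mul_inv]
  exact hx.mul_right hy

theorem commute_zpow_mul_zpow_mul {G : Type*} [Group G] {a b : G} (hab : Commute a b) (i j : ℤ) :
    Commute (a ^ i * b ^ j) (a * b) :=
  have ha : Commute a (a * b) := (Commute.refl a).mul_right hab
  have hb : Commute b (a * b) := hab.symm.mul_right (Commute.refl b)
  (ha.zpow_left i).mul_left (hb.zpow_left j)

section MulAction

variable {G X : Type*} [Group G] [MulAction G X]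

theorem sq_smul_eq_self_of_semiconjBy_inv {s g : G} {v : X} (h : SemiconjBy s g⁻¹ g)
    (hv : s • v = v) (hgv : s • g • v = g • v) : g ^ 2 • v = v :=
  calc g ^ 2 • v = g • g • v := by rw [sq, mul_smul]
    _ = g • s • g • v := by rw [hgv]
    _ = s • g⁻¹ • g • v := by rw [smul_smul g s, ← h.eq, mul_smul]
    _ = v := by rw [inv_smul_smul, hv]

theorem stmt13_general {a b m : G} (ha : SemiconjBy m a⁻¹ a) (hb : SemiconjBy m b⁻¹ b)
    (hab : Commute a b) {i j : ℤ} {v : X} (hv : (m * a ^ i * b ^ j) • v = v)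
    (habv : (m * a ^ i * b ^ j) • (a * b) • v = (a * b) • v) :
    a ^ (-2 : ℤ) • v = b ^ (2 : ℤ) • v := by
  rw [mul_assoc] at hv habv
  have hinv : SemiconjBy (m * (a ^ i * b ^ j)) (a * b)⁻¹ (a * b) :=
    (semiconjBy_mul_inv_of_commute hab ha hb).mul_left
      (commute_zpow_mul_zpow_mul hab i j).inv_right
  have hsq : (a * b) ^ 2 • v = v := sq_smul_eq_self_of_semiconjBy_inv hinv hv habv
  rw [zpow_neg, inv_smul_eq_iff, smul_smul, ← hab.mul_zpow, zpow_ofNat, hsq]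

end MulAction

theorem stmt13 (X : Type*) (α β μ : Equiv.Perm X) (hμ : μ ^ 2 = 1)
    (h1 : α * μ = μ * α⁻¹) (h2 : β * μ = μ * β⁻¹) (h3 : α * β = β * α)
    (i j : ℤ) (v : X)
    (hv1 : (μ * α ^ i * β ^ j) v = v)
    (hv2 : (μ * α ^ i * β ^ j) ((α * β) v) = (α * β) v) :
    (α ^ (-2 : ℤ)) v = (β ^ (2 : ℤ)) v :=
  stmt13_general h1.symm h2.symm h3 hv1 hv2
end
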